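/- Let p ∈ (0,1) and let M = (M_k)_{k≥0} satisfy M_k ≥ 1 for all k. Let f = ∑_{k=1}^m c_k χ_{I_k} be a step function, i.e. a finite linear combination of indicator functions of pairwise disjoint bounded intervals I_k with real coefficients c_k. Then there exists a sequence (f_i)_{i≥0} of smooth functions, each with all derivatives in L^p(ℝ) and ‖f_i‖_M < ∞, such that ‖f − f_i‖_p → 0 and sup_{n≥1} ‖f_i^{(n)}‖_p / M_n → 0 as i → ∞; consequently (f_i) is Cauchy with respect to ‖·‖_M and ‖f_i‖_M → ‖f‖_p / M_0. -/

import Mathlib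

open Real MeasureTheory Filter Set

noncomputable def pNorm (p : ℝ) (f : ℝ → ℝ) : ℝ := (∫ x : ℝ, |f x| ^ p) ^ (1 / p)

noncomputable def supNorm (f : ℝ → ℝ) : ℝ := ⨆ x : ℝ, |f x|

def MemLp' (p : ℝ) (f : ℝ → ℝ) : Prop := MeasureTheory.Integrable (fun x : ℝ => |f x| ^ p)

def BddFun (f : ℝ → ℝ) : Prop := ∃ C : ℝ, ∀ x, |f x| ≤ C

noncomputable def MNorm (p : ℝ) (M : ℕ → ℝ) (f : ℝ → ℝ) : ℝ :=
  ⨆ k : ℕ, pNorm p (iteratedDeriv k f) / M k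

/-- The class `S`: smooth functions whose derivatives are all bounded and in `L^p`,
with finite Carleman–Sobolev quasi-norm, and `limsup ‖f^(k)‖_∞ ^ (q^k) ≤ 1`. -/
def MemS (p q : ℝ) (M : ℕ → ℝ) (f : ℝ → ℝ) : Prop :=
  ContDiff ℝ (⊤ : ℕ∞) f ∧
  (∀ k, BddFun (iteratedDeriv k f) ∧ MemLp' p (iteratedDeriv k f)) ∧
  BddAbove (Set.range fun k : ℕ => pNorm p (iteratedDeriv k f) / M k) ∧
  Filter.limsup (fun k : ℕ => supNorm (iteratedDeriv k f) ^ (q ^ k)) Filter.atTop ≤ 1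

/-- `μ_M = ∏_{k=1}^∞ M_k ^ (p q^(k-1))`, as a `tprod`. -/
noncomputable def muProd (p q : ℝ) (M : ℕ → ℝ) : ℝ := ∏' k : ℕ, M (k + 1) ^ (p * q ^ k)

/-- Convergence of the product `μ_M`. -/
def MuFinite (p q : ℝ) (M : ℕ → ℝ) : Prop := Multipliable fun k : ℕ => M (k + 1) ^ (p * q ^ k)

/-- Iterated left averages of the Heaviside function. -/
noncomputable def avgT (h : ℕ → ℝ) : ℕ → ℕ → ℝ → ℝ
  | 0, _ => fun x => if 0 ≤ x then 1 else 0
  | N + 1, k => fun x => ∫ t in (0 : ℝ)..1, avgT h N (k + 1) (x - h k * t)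

lemma avgT_succ (h : ℕ → ℝ) (N k : ℕ) (x : ℝ) :
    avgT h (N + 1) k x = ∫ t in (0 : ℝ)..1, avgT h N (k + 1) (x - h k * t) := rfl

lemma mono_int {g : ℝ → ℝ} (hg : Monotone g) {c : ℝ} (hc : 0 ≤ c) (x a b : ℝ) :
    IntervalIntegrable (fun t => g (x - c * t)) volume a b := by
  apply Antitone.intervalIntegrable
  intro s t hst
  apply hg
  nlinarith [mul_le_mul_of_nonneg_left hst hc]

lemma avgT_mono (h : ℕ → ℝ) (hh : ∀ k, 0 < h k) (N : ℕ) : ∀ k, Monotone (avgT h N k) := by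
  induction N with
  | zero =>
    intro k x y hxy
    simp only [avgT]
    split_ifs <;> linarith
  | succ N ih =>
    intro k x y hxy
    rw [avgT_succ, avgT_succ]
    apply intervalIntegral.integral_mono_on zero_le_one
      (mono_int (ih _) (hh k).le _ _ _) (mono_int (ih _) (hh k).le _ _ _)
    intro t _
    apply ih
    linarith

lemma avgT_nonneg (h : ℕ → ℝ) (N : ℕ) : ∀ k x, 0 ≤ avgT h N k x := by
  induction N with
  | zero =>
    intro k x
    simp only [avgT]
    split_ifs <;> norm_num
  | succ N ih =>
    intro k x
    rw [avgT_succ]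
    exact intervalIntegral.integral_nonneg zero_le_one (fun t _ => ih _ _)

lemma avgT_le_one (h : ℕ → ℝ) (hh : ∀ k, 0 < h k) (N : ℕ) : ∀ k x, avgT h N k x ≤ 1 := by
  induction N with
  | zero =>
    intro k x
    simp only [avgT]
    split_ifs <;> norm_num
  | succ N ih =>
    intro k x
    rw [avgT_succ]
    calc _ ≤ ∫ t in (0 : ℝ)..1, (1 : ℝ) := by
          apply intervalIntegral.integral_mono_on zero_le_one
            (mono_int (avgT_mono h hh _ _) (hh k).le _ _ _) (by simp)
          intro t _
          exact ih _ _
      _ = 1 := by simp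

lemma avgT_neg (h : ℕ → ℝ) (hh : ∀ k, 0 < h k) (N : ℕ) : ∀ k x, x < 0 → avgT h N k x = 0 := by
  induction N with
  | zero =>
    intro k x hx
    simp [avgT, hx]
  | succ N ih =>
    intro k x hx
    rw [avgT_succ]
    have : ∫ t in (0 : ℝ)..1, avgT h N (k + 1) (x - h k * t) = ∫ t in (0 : ℝ)..1, (0 : ℝ) := by
      apply intervalIntegral.integral_congr
      intro t ht
      rw [uIcc_of_le zero_le_one] at ht
      apply ih
      nlinarith [hh k, ht.1]
    rw [this]; simp

lemma avgT_big (h : ℕ → ℝ) (hh : ∀ k, 0 < h k) (hh2 : ∀ k, h (k + 1) ≤ h k / 2) (N : ℕ) :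
    ∀ k x, 2 * h k ≤ x → avgT h N k x = 1 := by
  induction N with
  | zero =>
    intro k x hx
    have : 0 ≤ x := by linarith [hh k]
    simp [avgT, this]
  | succ N ih =>
    intro k x hx
    rw [avgT_succ]
    have : ∫ t in (0 : ℝ)..1, avgT h N (k + 1) (x - h k * t) = ∫ t in (0 : ℝ)..1, (1 : ℝ) := by
      apply intervalIntegral.integral_congr
      intro t ht
      rw [uIcc_of_le zero_le_one] at ht
      apply ih
      nlinarith [hh k, ht.2, hh2 k]
    rw [this]; simp

lemma avgT_anti (h : ℕ → ℝ) (hh : ∀ k, 0 < h k) (N : ℕ) :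
    ∀ k x, avgT h (N + 1) k x ≤ avgT h N k x := by
  induction N with
  | zero =>
    intro k x
    by_cases hx : 0 ≤ x
    · have : avgT h 0 k x = 1 := by simp [avgT, hx]
      rw [this]
      exact avgT_le_one h hh _ _ _
    · rw [avgT_neg h hh _ _ _ (not_le.1 hx)]
      exact avgT_nonneg _ _ _ _
  | succ N ih =>
    intro k x
    rw [avgT_succ, avgT_succ]
    apply intervalIntegral.integral_mono_on zero_le_one
      (mono_int (avgT_mono h hh _ _) (hh k).le _ _ _)
      (mono_int (avgT_mono h hh _ _) (hh k).le _ _ _)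
    intro t _
    apply ih

lemma exists_system (h : ℕ → ℝ) (hh : ∀ k, 0 < h k) (hh2 : ∀ k, h (k + 1) ≤ h k / 2) :
    ∃ Φ : ℕ → ℝ → ℝ, (∀ k x, 0 ≤ Φ k x ∧ Φ k x ≤ 1) ∧ (∀ k x, x < 0 → Φ k x = 0) ∧
      (∀ k x, 2 * h k ≤ x → Φ k x = 1) ∧
      ∀ k x, HasDerivAt (Φ k) ((h k)⁻¹ * (Φ (k + 1) x - Φ (k + 1) (x - h k))) x := by
  have hlim : ∀ k x, ∃ l, Tendsto (fun N => avgT h N k x) atTop (nhds l) := by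
    intro k x
    refine ⟨_, tendsto_atTop_ciInf (antitone_nat_of_succ_le (fun N => avgT_anti h hh N k x)) ?_⟩
    refine ⟨0, ?_⟩
    rintro _ ⟨N, rfl⟩
    exact avgT_nonneg _ _ _ _
  choose Φ hΦ using hlim
  have h01 : ∀ k x, 0 ≤ Φ k x ∧ Φ k x ≤ 1 := fun k x =>
    ⟨ge_of_tendsto' (hΦ k x) (fun N => avgT_nonneg h N k x),
      le_of_tendsto' (hΦ k x) (fun N => avgT_le_one h hh N k x)⟩
  have hmono : ∀ k, Monotone (Φ k) := fun k x y hxy =>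
    le_of_tendsto_of_tendsto' (hΦ k x) (hΦ k y) (fun N => avgT_mono h hh N k hxy)
  have hint : ∀ k x, Φ k x = ∫ t in (0 : ℝ)..1, Φ (k + 1) (x - h k * t) := by
    intro k x
    have h1 : Tendsto (fun N => avgT h (N + 1) k x) atTop (nhds (Φ k x)) :=
      (hΦ k x).comp (tendsto_add_atTop_nat 1)
    refine tendsto_nhds_unique h1 ?_
    simp only [avgT_succ]
    apply intervalIntegral.tendsto_integral_filter_of_dominated_convergence (fun _ => (1 : ℝ))
    · refine Eventually.of_forall fun N => ?_
      have := (mono_int (avgT_mono h hh N (k + 1)) (hh k).le x 0 1).aestronglyMeasurable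
      rwa [uIoc_of_le zero_le_one]
    · refine Eventually.of_forall fun N => Eventually.of_forall fun t _ => ?_
      rw [Real.norm_of_nonneg (avgT_nonneg _ _ _ _)]
      exact avgT_le_one h hh _ _ _
    · simp
    · exact Eventually.of_forall fun t _ => hΦ _ _
  have hii : ∀ k a b, IntervalIntegrable (Φ k) volume a b := fun k a b =>
    (hmono k).intervalIntegrable
  have hint2 : ∀ k x, Φ k x =
      (h k)⁻¹ * ((∫ t in (0 : ℝ)..x, Φ (k + 1) t) - ∫ t in (0 : ℝ)..(x - h k), Φ (k + 1) t) := by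
    intro k x
    rw [hint, intervalIntegral.integral_comp_sub_mul _ (hh k).ne',
      intervalIntegral.integral_interval_sub_left (hii _ _ _) (hii _ _ _)]
    simp
  have hcont : ∀ k, Continuous (Φ k) := by
    intro k
    rw [show Φ k = _ from funext (hint2 k)]
    have := intervalIntegral.continuous_primitive (hii (k + 1)) 0
    have h2 := this.comp (continuous_id.sub (continuous_const (y := h k)))
    exact continuous_const.mul (this.sub h2)
  refine ⟨Φ, h01, ?_, ?_, ?_⟩
  · intro k x hx
    refine tendsto_nhds_unique (hΦ k x) ?_
    simp only [avgT_neg h hh _ k x hx]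
    exact tendsto_const_nhds
  · intro k x hx
    refine tendsto_nhds_unique (hΦ k x) ?_
    simp only [avgT_big h hh hh2 _ k x hx]
    exact tendsto_const_nhds
  · intro k x
    have hd : ∀ y, HasDerivAt (fun u => ∫ t in (0 : ℝ)..u, Φ (k + 1) t) (Φ (k + 1) y) y :=
      fun y => intervalIntegral.integral_hasDerivAt_right (hii _ _ _)
        (hcont _).stronglyMeasurable.stronglyMeasurableAtFilter (hcont _).continuousAt
    have h2 := (hd (x - h k)).comp_sub_const x (h k)
    have h3 := ((hd x).sub h2).const_mul (h k)⁻¹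
    exact h3.congr_of_eventuallyEq (Eventually.of_forall (hint2 k))

lemma system_contDiff (h : ℕ → ℝ) (Φ : ℕ → ℝ → ℝ)
    (hd : ∀ k x, HasDerivAt (Φ k) ((h k)⁻¹ * (Φ (k + 1) x - Φ (k + 1) (x - h k))) x) (k : ℕ) :
    ContDiff ℝ (⊤ : ℕ∞) (Φ k) := by
  rw [contDiff_infty]
  intro n
  induction n generalizing k with
  | zero =>
    have : Differentiable ℝ (Φ k) := fun x => (hd k x).differentiableAt
    exact contDiff_zero.2 this.continuous
  | succ n ih =>
    push_cast
    rw [contDiff_succ_iff_deriv]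
    refine ⟨fun x => (hd k x).differentiableAt, by simp, ?_⟩
    rw [show deriv (Φ k) = _ from funext fun x => (hd k x).deriv]
    have h1 := ih (k + 1)
    fun_prop

/-- `g` is measurable, in `L^p`, with `∫ |g|^p ≤ K`. -/
def QB (p K : ℝ) (g : ℝ → ℝ) : Prop :=
  Measurable g ∧ Integrable (fun x : ℝ => |g x| ^ p) ∧ ∫ x : ℝ, |g x| ^ p ≤ K

lemma abs_add_rpow {p : ℝ} (hp : 0 < p) (hp1 : p < 1) (a b : ℝ) :
    |a + b| ^ p ≤ |a| ^ p + |b| ^ p :=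
  (Real.rpow_le_rpow (abs_nonneg _) (abs_add_le a b) hp.le).trans
    (Real.rpow_add_le_add_rpow (abs_nonneg _) (abs_nonneg _) hp.le hp1.le)

lemma QB.add {p K L : ℝ} (hp : 0 < p) (hp1 : p < 1) {g k : ℝ → ℝ} (hg : QB p K g)
    (hk : QB p L k) : QB p (K + L) (fun x => g x + k x) := by
  obtain ⟨g1, g2, g3⟩ := hg
  obtain ⟨k1, k2, k3⟩ := hk
  have hm := g1.add k1
  have hi : Integrable (fun x : ℝ => |g x + k x| ^ p) := by
    refine (g2.add k2).mono' ?_ ?_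
    · exact (((continuous_abs.measurable.comp hm).pow_const p)).aestronglyMeasurable
    · refine Eventually.of_forall fun x => ?_
      rw [Real.norm_of_nonneg (by positivity)]
      exact abs_add_rpow hp hp1 _ _
  refine ⟨hm, hi, ?_⟩
  calc _ ≤ ∫ x, (|g x| ^ p + |k x| ^ p) :=
        integral_mono hi (g2.add k2) (fun x => abs_add_rpow hp hp1 _ _)
    _ = _ := integral_add g2 k2
    _ ≤ _ := add_le_add g3 k3

lemma QB.const_mul {p K : ℝ} {g : ℝ → ℝ} (hg : QB p K g) (c : ℝ) :
    QB p (|c| ^ p * K) (fun x => c * g x) := by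
  obtain ⟨g1, g2, g3⟩ := hg
  refine ⟨g1.const_mul c, ?_, ?_⟩
  · simp only [abs_mul, Real.mul_rpow (abs_nonneg _) (abs_nonneg _)]
    exact g2.const_mul _
  · simp only [abs_mul, Real.mul_rpow (abs_nonneg _) (abs_nonneg _), integral_const_mul]
    gcongr

lemma QB.sub {p K L : ℝ} (hp : 0 < p) (hp1 : p < 1) {g k : ℝ → ℝ} (hg : QB p K g)
    (hk : QB p L k) : QB p (K + L) (fun x => g x - k x) := by
  have := hg.add hp hp1 (hk.const_mul (-1))
  simpa [sub_eq_add_neg] using this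

lemma QB.shift {p K : ℝ} {g : ℝ → ℝ} (hg : QB p K g) (a : ℝ) :
    QB p K (fun x => g (x - a)) := by
  obtain ⟨g1, g2, g3⟩ := hg
  refine ⟨g1.comp (measurable_id.sub_const a), g2.comp_sub_right a, ?_⟩
  rwa [integral_sub_right_eq_self (fun x => |g x| ^ p) a]

lemma QB.mono {p K L : ℝ} {g : ℝ → ℝ} (hg : QB p K g) (h : K ≤ L) : QB p L g :=
  ⟨hg.1, hg.2.1, hg.2.2.trans h⟩

lemma QB.bdd {p : ℝ} (hp : 0 < p) {g : ℝ → ℝ} (hg : Measurable g) {C a b : ℝ} (hab : a ≤ b)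
    (hC : 0 ≤ C) (hb : ∀ x, |g x| ≤ C) (h0 : ∀ x, x ∉ Icc a b → g x = 0) :
    QB p (C ^ p * (b - a)) g := by
  have hle : ∀ x, |g x| ^ p ≤ (Icc a b).indicator (fun _ => C ^ p) x := by
    intro x
    by_cases hx : x ∈ Icc a b
    · rw [indicator_of_mem hx]
      exact Real.rpow_le_rpow (abs_nonneg _) (hb x) hp.le
    · rw [indicator_of_notMem hx, h0 x hx, abs_zero, Real.zero_rpow hp.ne']
  have hI : Integrable ((Icc a b).indicator (fun _ : ℝ => C ^ p)) := by
    rw [integrable_indicator_iff measurableSet_Icc]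
    exact integrableOn_const (by simp) (by simp)
  have hi : Integrable (fun x : ℝ => |g x| ^ p) := by
    refine hI.mono' ?_ ?_
    · exact (((continuous_abs.measurable.comp hg).pow_const p)).aestronglyMeasurable
    · refine Eventually.of_forall fun x => ?_
      rw [Real.norm_of_nonneg (by positivity)]
      exact hle x
  refine ⟨hg, hi, (integral_mono hi hI hle).trans ?_⟩
  rw [integral_indicator measurableSet_Icc, setIntegral_const]
  simp [Measure.real, hab, mul_comm]

lemma QB.sum {p : ℝ} (hp : 0 < p) (hp1 : p < 1) {ι : Type*} (s : Finset ι) (K : ι → ℝ)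
    (g : ι → ℝ → ℝ) (hg : ∀ i, QB p (K i) (g i)) :
    QB p (∑ i ∈ s, K i) (fun x => ∑ i ∈ s, g i x) := by
  classical
  induction s using Finset.induction_on with
  | empty =>
    refine ⟨by simp, ?_, ?_⟩ <;> simp [Real.zero_rpow hp.ne']
  | insert a s ha ih =>
    simp only [Finset.sum_insert ha]
    exact (hg a).add hp hp1 ih

lemma choose_h {p : ℝ} (hp1 : p < 1) {ε : ℝ} (hε : 0 < ε) (C h : ℝ) (hh : 0 < h) :
    ∃ h' : ℝ, 0 < h' ∧ h' ≤ h / 2 ∧ C * (2 * h' ^ (1 - p)) ≤ ε := by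
  have hc : ContinuousAt (fun x : ℝ => C * (2 * x ^ (1 - p))) 0 := by
    have := Real.continuousAt_rpow_const 0 (1 - p) (Or.inr (by linarith))
    fun_prop
  have h0 : C * (2 * (0 : ℝ) ^ (1 - p)) < ε := by
    rw [Real.zero_rpow (by linarith)]; simpa
  have h1 : ∀ᶠ x in nhdsWithin (0 : ℝ) (Ioi 0), C * (2 * x ^ (1 - p)) < ε :=
    nhdsWithin_le_nhds (hc.eventually_lt_const h0)
  have h2 : ∀ᶠ x in nhdsWithin (0 : ℝ) (Ioi 0), x ∈ Ioo 0 (h / 2) :=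
    Ioo_mem_nhdsGT (by linarith)
  obtain ⟨x, hx1, hx2⟩ := (h1.and h2).exists
  exact ⟨x, hx2.1, hx2.2.le, hx1.le⟩

lemma exists_h {p : ℝ} (hp1 : p < 1) {ε : ℝ} (hε : 0 < ε) :
    ∃ h C : ℕ → ℝ, (∀ k, 0 < h k) ∧ (∀ k, h (k + 1) ≤ h k / 2) ∧ 2 * h 0 ≤ ε ∧ C 0 = 1 ∧
      (∀ k, 0 < C k) ∧ (∀ k, C (k + 1) = 2 * C k * ((h k)⁻¹) ^ p) ∧
      ∀ k, C k * (2 * h k ^ (1 - p)) ≤ ε := by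
  have H := fun (C h : ℝ) (hh : 0 < h) => choose_h hp1 hε C h hh
  choose! φ h1 h2 h3 using H
  let s : ℕ → ℝ × ℝ := fun n => Nat.rec (φ 1 ε, 1)
    (fun _ q => (φ (2 * q.2 * (q.1⁻¹) ^ p) q.1, 2 * q.2 * (q.1⁻¹) ^ p)) n
  have s0 : s 0 = (φ 1 ε, 1) := rfl
  have ss : ∀ n, s (n + 1) = (φ (2 * (s n).2 * ((s n).1⁻¹) ^ p) (s n).1,
    2 * (s n).2 * ((s n).1⁻¹) ^ p) := fun n => rfl
  have hpos : ∀ k, 0 < (s k).1 := by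
    intro k
    induction k with
    | zero => rw [s0]; exact h1 _ _ hε
    | succ k ih => rw [ss]; exact h1 _ _ ih
  refine ⟨fun n => (s n).1, fun n => (s n).2, hpos, ?_, ?_, rfl, ?_, fun k => rfl, ?_⟩
  · intro k
    simp only [ss]
    exact h2 _ _ (hpos k)
  · simp only [s0]
    linarith [h2 1 ε hε]
  · intro k
    induction k with
    | zero => simp [s0]
    | succ k ih =>
      simp only [ss]
      have := hpos k
      positivity
  · intro k
    cases k with
    | zero => exact h3 _ _ hε
    | succ k => exact h3 _ _ (hpos k)

lemma exists_phi {p : ℝ} (hp : 0 < p) (hp1 : p < 1) {ε : ℝ} (hε : 0 < ε) :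
    ∃ Φ : ℝ → ℝ, ContDiff ℝ (⊤ : ℕ∞) Φ ∧ (∀ x, 0 ≤ Φ x ∧ Φ x ≤ 1) ∧ (∀ x, x < 0 → Φ x = 0) ∧
      (∀ x, ε ≤ x → Φ x = 1) ∧ ∀ n, QB p ε (iteratedDeriv (n + 1) Φ) := by
  obtain ⟨h, C, hh, hh2, hhε, hC0, hC, hCs, hCε⟩ := exists_h hp1 hε
  obtain ⟨Φ, h01, hneg, hbig, hd⟩ := exists_system h hh hh2
  have hsm := system_contDiff h Φ hd
  have hder : ∀ k, deriv (Φ k) = fun x => (h k)⁻¹ * (Φ (k + 1) x - Φ (k + 1) (x - h k)) :=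
    fun k => funext fun x => (hd k x).deriv
  have key : ∀ n k, QB p (ε / C k) (iteratedDeriv (n + 1) (Φ k)) := by
    intro n
    induction n with
    | zero =>
      intro k
      rw [zero_add, iteratedDeriv_one]
      have hhk := hh k
      have := QB.bdd (p := p) hp (g := deriv (Φ k)) (C := (h k)⁻¹) (a := 0) (b := 2 * h k)
        (measurable_deriv _) (by linarith) (by positivity) ?_ ?_
      · refine this.mono ?_
        rw [le_div_iff₀ (hC k)]
        refine le_trans (le_of_eq ?_) (hCε k)
        rw [Real.rpow_sub hhk, Real.rpow_one, Real.inv_rpow hhk.le]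
        field_simp
        ring
      · intro x
        rw [hder]
        simp only [abs_mul]
        rw [abs_of_pos (inv_pos.2 hhk)]
        have : |Φ (k + 1) x - Φ (k + 1) (x - h k)| ≤ 1 := by
          rw [abs_le]
          constructor <;> linarith [(h01 (k + 1) x).1, (h01 (k + 1) x).2,
            (h01 (k + 1) (x - h k)).1, (h01 (k + 1) (x - h k)).2]
        exact mul_le_of_le_one_right (inv_pos.2 hhk).le this
      · intro x hx
        rw [hder]
        simp only [mem_Icc, not_and_or, not_le] at hx
        simp only
        rcases hx with hx | hx
        · rw [hneg _ _ hx, hneg _ _ (by linarith)]; simp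
        · rw [hbig _ x (by linarith [hh2 k]), hbig _ (x - h k) (by linarith [hh2 k])]; simp
    | succ n ih =>
      intro k
      rw [iteratedDeriv_succ', hder]
      have e : iteratedDeriv (n + 1) (fun x => (h k)⁻¹ * (Φ (k + 1) x - Φ (k + 1) (x - h k))) =
          fun x => (h k)⁻¹ * (iteratedDeriv (n + 1) (Φ (k + 1)) x -
            iteratedDeriv (n + 1) (Φ (k + 1)) (x - h k)) := by
        funext x
        have c1 : ContDiff ℝ ((n + 1 : ℕ) : WithTop ℕ∞) (Φ (k + 1)) := contDiff_infty.1 (hsm _) _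
        have c2 : ContDiff ℝ ((n + 1 : ℕ) : WithTop ℕ∞) (fun x => Φ (k + 1) (x - h k)) := by
          fun_prop
        rw [iteratedDeriv_const_mul _ (c1.sub c2).contDiffAt,
          iteratedDeriv_fun_sub c1.contDiffAt c2.contDiffAt, iteratedDeriv_comp_sub_const]
      rw [e]
      refine (((ih (k + 1)).sub hp hp1 ((ih (k + 1)).shift (h k))).const_mul _).mono ?_
      have hhk := hh k
      have := hC k
      rw [abs_of_pos (inv_pos.2 hhk), hCs]
      apply le_of_eq
      field_simp
      ring
  refine ⟨Φ 0, hsm 0, h01 0, hneg 0, fun x hx => hbig 0 x (by linarith), fun n => ?_⟩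
  simpa [hC0] using key n 0

/-- Lemma: approximation of step functions. Any finite linear combination of
indicators of pairwise disjoint bounded intervals is the `L^p`-limit of a `‖·‖_M`-Cauchy
sequence of smooth functions whose weighted derivative norms tend to `0`, and whose
`‖·‖_M`-norms tend to `‖f‖_p / M_0`. -/
theorem step_function_approx (p : ℝ) (hp : 0 < p) (hp1 : p < 1)
    (M : ℕ → ℝ) (hM : ∀ k, 1 ≤ M k)
    (m : ℕ) (c : Fin m → ℝ) (A B : Fin m → ℝ) (hAB : ∀ k, A k < B k)
    (hdisj : ∀ k l, k ≠ l → Disjoint (Set.Icc (A k) (B k)) (Set.Icc (A l) (B l)))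
    (f : ℝ → ℝ)
    (hf : f = fun x => ∑ k, c k * Set.indicator (Set.Icc (A k) (B k)) (fun _ => (1 : ℝ)) x) :
    ∃ F : ℕ → ℝ → ℝ,
      (∀ i, ContDiff ℝ (⊤ : ℕ∞) (F i) ∧ (∀ n, MemLp' p (iteratedDeriv n (F i))) ∧
        BddAbove (Set.range fun k : ℕ => pNorm p (iteratedDeriv k (F i)) / M k)) ∧
      Filter.Tendsto (fun i => pNorm p (fun x => f x - F i x)) Filter.atTop (nhds 0) ∧
      Filter.Tendsto (fun i => ⨆ n : ℕ, pNorm p (iteratedDeriv (n + 1) (F i)) / M (n + 1))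
        Filter.atTop (nhds 0) ∧
      (∀ ε > 0, ∃ N, ∀ i ≥ N, ∀ j ≥ N, MNorm p M (fun x => F i x - F j x) < ε) ∧
      Filter.Tendsto (fun i => MNorm p M (F i)) Filter.atTop (nhds (pNorm p f / M 0)) := by
  classical
  set K : ℝ := ∑ k, |c k| ^ p * 2 with hK
  have hK0 : 0 ≤ K := Finset.sum_nonneg fun k _ => by positivity
  have hεp : ∀ i : ℕ, 0 < 1 / ((i : ℝ) + 1) := fun i => by positivity
  choose Φ hsm h01 hneg hbig hQ using fun i : ℕ => exists_phi hp hp1 (hεp i)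
  set δ : ℕ → ℝ := fun i => K * (1 / ((i : ℝ) + 1)) with hδ
  have hδ0 : ∀ i, 0 ≤ δ i := fun i => mul_nonneg hK0 (hεp i).le
  have hδt : Tendsto δ atTop (nhds 0) := by
    have := (tendsto_one_div_add_atTop_nhds_zero_nat (𝕜 := ℝ)).const_mul K
    rwa [mul_zero] at this
  set F : ℕ → ℝ → ℝ := fun i x => ∑ k, c k * (Φ i (x - A k) - Φ i (x - B k)) with hF
  have hFsm : ∀ i, ContDiff ℝ (⊤ : ℕ∞) (F i) := by
    intro i
    have := hsm i
    simp only [hF]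
    fun_prop
  have hFn : ∀ i (n : ℕ), ContDiff ℝ (n : WithTop ℕ∞) (F i) :=
    fun i n => contDiff_infty.1 (hFsm i) n
  -- derivatives
  have hFd : ∀ i n, QB p (δ i) (iteratedDeriv (n + 1) (F i)) := by
    intro i n
    have e : iteratedDeriv (n + 1) (F i) = fun x => ∑ k, c k *
        (iteratedDeriv (n + 1) (Φ i) (x - A k) - iteratedDeriv (n + 1) (Φ i) (x - B k)) := by
      funext x
      have c1 : ContDiff ℝ ((n + 1 : ℕ) : WithTop ℕ∞) (Φ i) := contDiff_infty.1 (hsm i) _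
      have c2 : ∀ a, ContDiff ℝ ((n + 1 : ℕ) : WithTop ℕ∞) (fun x => Φ i (x - a)) := by
        intro a; fun_prop
      simp only [hF]
      rw [iteratedDeriv_fun_sum
        (fun k _ => (contDiff_const.mul ((c2 (A k)).sub (c2 (B k)))).contDiffAt)]
      refine Finset.sum_congr rfl fun k _ => ?_
      rw [iteratedDeriv_const_mul _ ((c2 (A k)).sub (c2 (B k))).contDiffAt,
        iteratedDeriv_fun_sub (c2 (A k)).contDiffAt (c2 (B k)).contDiffAt,
        iteratedDeriv_comp_sub_const, iteratedDeriv_comp_sub_const]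
    rw [e]
    refine (QB.sum hp hp1 Finset.univ _ _ (fun k => (((hQ i n).shift (A k)).sub hp hp1
      ((hQ i n).shift (B k))).const_mul (c k))).mono (le_of_eq ?_)
    rw [hδ, hK]
    simp only [Finset.sum_mul]
    refine Finset.sum_congr rfl fun k _ => ?_
    ring
  -- approximation
  have hfF : ∀ i, QB p (δ i) (fun x => f x - F i x) := by
    intro i
    have q1 : QB p (1 / ((i : ℝ) + 1)) (fun x => (Ici (0 : ℝ)).indicator (fun _ => (1 : ℝ)) x - Φ i x) := by
      have := QB.bdd (p := p) hp
        (g := fun x => (Ici (0 : ℝ)).indicator (fun _ => (1 : ℝ)) x - Φ i x)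
        (C := 1) (a := 0) (b := 1 / ((i : ℝ) + 1))
        ((measurable_const.indicator measurableSet_Ici).sub (hsm i).continuous.measurable)
        (hεp i).le zero_le_one ?_ ?_
      · simpa using this
      · intro x
        by_cases hx : x ∈ Ici (0 : ℝ)
        · simp only [indicator_of_mem hx]
          rw [abs_le]; constructor <;> linarith [(h01 i x).1, (h01 i x).2]
        · simp only [indicator_of_notMem hx]
          rw [abs_le]; constructor <;> linarith [(h01 i x).1, (h01 i x).2]
      · intro x hx
        simp only [mem_Icc, not_and_or, not_le] at hx
        rcases hx with hx | hx
        · rw [indicator_of_notMem (by simpa using hx), hneg i x hx, sub_zero]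
        · rw [indicator_of_mem (mem_Ici.2 ((hεp i).trans hx).le), hbig i x hx.le, sub_self]
    have q2 : QB p (1 / ((i : ℝ) + 1)) (fun x => (Ioi (0 : ℝ)).indicator (fun _ => (1 : ℝ)) x - Φ i x) := by
      have := QB.bdd (p := p) hp
        (g := fun x => (Ioi (0 : ℝ)).indicator (fun _ => (1 : ℝ)) x - Φ i x)
        (C := 1) (a := 0) (b := 1 / ((i : ℝ) + 1))
        ((measurable_const.indicator measurableSet_Ioi).sub (hsm i).continuous.measurable)
        (hεp i).le zero_le_one ?_ ?_
      · simpa using this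
      · intro x
        by_cases hx : x ∈ Ioi (0 : ℝ)
        · simp only [indicator_of_mem hx]
          rw [abs_le]; constructor <;> linarith [(h01 i x).1, (h01 i x).2]
        · simp only [indicator_of_notMem hx]
          rw [abs_le]; constructor <;> linarith [(h01 i x).1, (h01 i x).2]
      · intro x hx
        simp only [mem_Icc, not_and_or, not_le] at hx
        rcases hx with hx | hx
        · rw [indicator_of_notMem (by simpa using hx.le), hneg i x hx, sub_zero]
        · rw [indicator_of_mem (mem_Ioi.2 ((hεp i).trans hx)), hbig i x hx.le, sub_self]
    have e : (fun x => f x - F i x) = fun x => ∑ k, c k *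
        (((Ici (0 : ℝ)).indicator (fun _ => (1 : ℝ)) (x - A k) - Φ i (x - A k)) -
        ((Ioi (0 : ℝ)).indicator (fun _ => (1 : ℝ)) (x - B k) - Φ i (x - B k))) := by
      funext x
      simp only [hf, hF]
      rw [← Finset.sum_sub_distrib]
      refine Finset.sum_congr rfl fun k _ => ?_
      have : (Icc (A k) (B k)).indicator (fun _ => (1 : ℝ)) x =
          (Ici (0 : ℝ)).indicator (fun _ => (1 : ℝ)) (x - A k) -
          (Ioi (0 : ℝ)).indicator (fun _ => (1 : ℝ)) (x - B k) := by
        simp only [indicator_apply, mem_Icc, mem_Ici, mem_Ioi, sub_nonneg, sub_pos]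
        have := hAB k
        by_cases h1 : A k ≤ x <;> by_cases h2 : B k < x
        · simp [h1, h2]
        · simp [h1, h2, not_lt.1 h2]
        · linarith
        · simp [h1, h2]
      rw [this]
      ring
    rw [e]
    refine (QB.sum hp hp1 Finset.univ _ _ (fun k => ((q1.shift (A k)).sub hp hp1
      (q2.shift (B k))).const_mul (c k))).mono (le_of_eq ?_)
    rw [hδ, hK]
    simp only [Finset.sum_mul]
    refine Finset.sum_congr rfl fun k _ => ?_
    ring
  have hfQ : ∃ L, QB p L f := by
    refine ⟨∑ k, |c k| ^ p * ((1 : ℝ) ^ p * (B k - A k)), ?_⟩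
    rw [hf]
    refine QB.sum hp hp1 Finset.univ _ _ (fun k => QB.const_mul (QB.bdd hp
      (measurable_const.indicator measurableSet_Icc) (hAB k).le zero_le_one ?_ ?_) (c k))
    · intro x
      by_cases hx : x ∈ Icc (A k) (B k)
      · simp [indicator_of_mem hx]
      · simp [indicator_of_notMem hx]
    · intro x hx
      exact indicator_of_notMem hx _
  obtain ⟨L, hL⟩ := hfQ
  have hf' : QB p (∫ x, |f x| ^ p) f := ⟨hL.1, hL.2.1, le_rfl⟩
  have hFQ : ∀ i, QB p ((∫ x, |f x| ^ p) + δ i) (F i) := by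
    intro i
    simpa using hf'.sub hp hp1 (hfF i)
  have hfle : ∀ i, ∫ x, |f x| ^ p ≤ δ i + ∫ x, |F i x| ^ p := by
    intro i
    have h1 : QB p (∫ x, |F i x| ^ p) (F i) := ⟨(hFQ i).1, (hFQ i).2.1, le_rfl⟩
    simpa using ((hfF i).add hp hp1 h1).2.2
  have hp' : 0 < 1 / p := by positivity
  have pn0 : ∀ g, 0 ≤ pNorm p g := fun g => Real.rpow_nonneg
    (integral_nonneg fun x => Real.rpow_nonneg (abs_nonneg _) _) _
  have pnle : ∀ {L g}, QB p L g → pNorm p g ≤ L ^ (1 / p) := fun hg =>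
    Real.rpow_le_rpow (integral_nonneg fun x => Real.rpow_nonneg (abs_nonneg _) _) hg.2.2 hp'.le
  have divle : ∀ g k, pNorm p g / M k ≤ pNorm p g := fun g k => div_le_self (pn0 g) (hM k)
  have hM0 : ∀ k, 0 < M k := fun k => zero_lt_one.trans_le (hM k)
  have hrt : Tendsto (fun i => δ i ^ (1 / p)) atTop (nhds 0) := by
    have := hδt.rpow_const (p := 1 / p) (Or.inr hp'.le)
    rwa [Real.zero_rpow hp'.ne'] at this
  have hFbd : ∀ i k, pNorm p (iteratedDeriv k (F i)) / M k ≤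
      max (pNorm p (F i) / M 0) (δ i ^ (1 / p)) := by
    intro i k
    cases k with
    | zero => simp
    | succ n => exact le_max_of_le_right ((divle _ _).trans (pnle (hFd i n)))
  have hbdd : ∀ i, BddAbove (Set.range fun k : ℕ => pNorm p (iteratedDeriv k (F i)) / M k) := by
    intro i
    refine ⟨max (pNorm p (F i) / M 0) (δ i ^ (1 / p)), ?_⟩
    rintro _ ⟨k, rfl⟩
    exact hFbd i k
  refine ⟨F, fun i => ⟨hFsm i, ?_, hbdd i⟩, ?_, ?_, ?_, ?_⟩
  · intro n
    cases n with
    | zero => rw [iteratedDeriv_zero]; exact (hFQ i).2.1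
    | succ n => exact (hFd i n).2.1
  · exact squeeze_zero (fun i => pn0 _) (fun i => pnle (hfF i)) hrt
  · refine squeeze_zero (fun i => Real.iSup_nonneg fun n => div_nonneg (pn0 _) (hM0 _).le)
      (fun i => ciSup_le fun n => (divle _ _).trans (pnle (hFd i n))) hrt
  · intro ε hε
    have hc : ContinuousAt (fun t : ℝ => t ^ (1 / p)) 0 :=
      Real.continuousAt_rpow_const 0 (1 / p) (Or.inr hp'.le)
    have hev : ∀ᶠ t in nhds (0 : ℝ), t ^ (1 / p) < ε :=
      hc.eventually_lt_const (by simpa only [Real.zero_rpow hp'.ne'] using hε)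
    obtain ⟨η, hη, hηb⟩ := Metric.eventually_nhds_iff.1 hev
    obtain ⟨N, hN⟩ := eventually_atTop.1 (hδt.eventually_lt_const (half_pos hη))
    refine ⟨N, fun i hi j hj => ?_⟩
    have hq : ∀ k, QB p (δ i + δ j) (iteratedDeriv k (fun x => F i x - F j x)) := by
      intro k
      cases k with
      | zero =>
        rw [iteratedDeriv_zero]
        have := (hfF j).sub hp hp1 (hfF i)
        simp only [sub_sub_sub_cancel_left] at this
        rwa [add_comm]
      | succ n =>
        have e : iteratedDeriv (n + 1) (fun x => F i x - F j x) = fun x =>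
            iteratedDeriv (n + 1) (F i) x - iteratedDeriv (n + 1) (F j) x := by
          funext x
          exact iteratedDeriv_fun_sub (hFn i _).contDiffAt (hFn j _).contDiffAt
        rw [e]
        exact (hFd i n).sub hp hp1 (hFd j n)
    refine (ciSup_le fun k => (divle _ _).trans (pnle (hq k))).trans_lt ?_
    apply hηb
    rw [Real.dist_eq, sub_zero, abs_of_nonneg (add_nonneg (hδ0 i) (hδ0 j))]
    linarith [hN i hi, hN j hj]
  · have hI : Tendsto (fun i => ∫ x, |F i x| ^ p) atTop (nhds (∫ x, |f x| ^ p)) := by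
      refine tendsto_of_tendsto_of_tendsto_of_le_of_le
        (g := fun i => (∫ x, |f x| ^ p) - δ i) (h := fun i => (∫ x, |f x| ^ p) + δ i) ?_ ?_ ?_ ?_
      · simpa using hδt.const_sub (∫ x, |f x| ^ p)
      · simpa using hδt.const_add (∫ x, |f x| ^ p)
      · intro i; simp only; linarith [hfle i]
      · intro i; exact (hFQ i).2.2
    have hP : Tendsto (fun i => pNorm p (F i) / M 0) atTop (nhds (pNorm p f / M 0)) :=
      (hI.rpow_const (Or.inr hp'.le)).div_const _
    have hmax := hP.max hrt
    rw [max_eq_left (div_nonneg (pn0 f) (hM0 0).le)] at hmax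
    refine tendsto_of_tendsto_of_tendsto_of_le_of_le hP hmax ?_ ?_
    · intro i
      have := le_ciSup (hbdd i) 0
      simpa [MNorm] using this
    · intro i
      exact ciSup_le (hFbd i)
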